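/- There exist constants c > 0 and γ₀ > 0 such that for all γ = N^{−1/2} ≤ γ₀ and all ω ∈ Λ_N, the Fourier transform of the macroscopic Kac kernel satisfies 1 − K̂_γ(ω) ≥ c · min(γ²|ω|², 1). -/

import Mathlib

open scoped BigOperators ENNReal
open MeasureTheory

noncomputable section

namespace IsingKac

/-- The periodic lattice `Λ_N = {1-N, …, N}²`, realised as `(ℤ/2Nℤ)²`. -/
abbrev Lat (N : ℕ) : Type := ZMod (2*N) × ZMod (2*N)

instance latNeZero (N : ℕ) [NeZero N] : NeZero (2*N) := ⟨by have := NeZero.ne N; omega⟩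

/-- The representative of `v ∈ ℤ/2Nℤ` lying in `{1-N, …, N}`. -/
def latRep (N : ℕ) (v : ZMod (2*N)) : ℤ :=
  if (v.val : ℤ) ≤ (N : ℤ) then (v.val : ℤ) else (v.val : ℤ) - 2*N

def latRep2 (N : ℕ) (z : Lat N) : ℤ × ℤ := (latRep N z.1, latRep N z.2)

/-- The character `e_w(x) = exp(iπ w·x)`. -/
def eW (w : ℤ × ℤ) (x : ℝ × ℝ) : ℂ :=
  Complex.exp ((Real.pi : ℂ) * Complex.I * ((w.1 : ℂ) * (x.1 : ℂ) + (w.2 : ℂ) * (x.2 : ℂ)))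

/-- The point `ε z ∈ Λ_ε ⊂ 𝕋²` corresponding to `z ∈ Λ_N` (with `ε = 1/N`). -/
def latPt (N : ℕ) (z : Lat N) : ℝ × ℝ :=
  ((latRep N z.1 : ℝ) / N, (latRep N z.2 : ℝ) / N)

/-- Discrete Fourier coefficient `f̂(w) = Σ_{x ∈ Λ_ε} ε² f(x) e^{-iπ w·x}`. -/
def dFT (N : ℕ) [NeZero N] (f : Lat N → ℂ) (w : ℤ × ℤ) : ℂ :=
  ∑ z : Lat N, ((N : ℂ)^2)⁻¹ * f z * (starRingEnd ℂ) (eW w (latPt N z))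

/-- The extension operator `(Ex f)(x) = (1/4) Σ_{w ∈ Λ_N} f̂(w) e^{iπ w·x}` for `x ∈ 𝕋²`. -/
def Ex (N : ℕ) [NeZero N] (f : Lat N → ℂ) (x : ℝ × ℝ) : ℂ :=
  (1/4 : ℂ) * ∑ z : Lat N, dFT N f (latRep2 N z) * eW (latRep2 N z) x

/-- Discrete `L^p` norm on `Λ_ε`, `p ∈ [1,∞]`. -/
def dLp (N : ℕ) [NeZero N] (p : ℝ≥0∞) {E : Type*} [NormedAddCommGroup E]
    (f : Lat N → E) : ℝ :=
  if p = ∞ then ⨆ z : Lat N, ‖f z‖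
  else (∑ z : Lat N, ((N : ℝ)^2)⁻¹ * ‖f z‖ ^ p.toReal) ^ (1/p.toReal)

/-- Fundamental domain of the torus `𝕋² = [-1,1]²`. -/
def box : Set (ℝ × ℝ) := Set.Icc (-1 : ℝ) 1 ×ˢ Set.Icc (-1 : ℝ) 1

/-- `L^p(𝕋²)` norm, `p ∈ [1,∞]`. -/
def cLp (p : ℝ≥0∞) {E : Type*} [NormedAddCommGroup E] (g : ℝ × ℝ → E) : ℝ≥0∞ :=
  eLpNorm g p (volume.restrict box)

/-- Euclidean norm on `ℝ²`. -/
def enorm2 (r : ℝ × ℝ) : ℝ := Real.sqrt (r.1^2 + r.2^2)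

/-- A Littlewood–Paley partition of unity `(χ̃, χ)` on `ℝ²`. -/
structure LPpartition : Type where
  chit : ℝ × ℝ → ℝ
  chi : ℝ × ℝ → ℝ
  cont_t : Continuous chit
  cont : Continuous chi
  mem_t : ∀ r, chit r ∈ Set.Icc (0:ℝ) 1
  mem : ∀ r, chi r ∈ Set.Icc (0:ℝ) 1
  supp_t : ∀ r : ℝ × ℝ, 4/3 < enorm2 r → chit r = 0
  supp : ∀ r : ℝ × ℝ, enorm2 r < 3/4 ∨ 8/3 < enorm2 r → chi r = 0
  partition : ∀ r : ℝ × ℝ, chit r + ∑' k : ℕ, chi ((2:ℝ)^(-(k:ℤ)) • r) = 1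

/-- `χ_k`, for `k ≥ -1`. -/
def LPchi (P : LPpartition) (k : ℤ) : ℝ × ℝ → ℝ :=
  if k = -1 then P.chit else fun r => P.chi ((2:ℝ)^(-k) • r)

/-- The Littlewood–Paley block `δ_k (Ex f)` of (the extension of) a lattice function. -/
def dBlock (N : ℕ) [NeZero N] (P : LPpartition) (k : ℤ) (f : Lat N → ℂ) (x : ℝ × ℝ) : ℂ :=
  (1/4 : ℂ) * ∑ z : Lat N,
    ((LPchi P k ((latRep N z.1 : ℝ), (latRep N z.2 : ℝ)) : ℝ) : ℂ) *
      dFT N f (latRep2 N z) * eW (latRep2 N z) x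

/-- Discrete Besov norm `‖f‖_{B^ν_{p,q}(Λ_ε)}`. -/
def dBesov (N : ℕ) [NeZero N] (P : LPpartition) (ν : ℝ) (p q : ℝ≥0∞) (f : Lat N → ℂ) : ℝ :=
  if q = ∞ then
    ⨆ k : ℕ, (2:ℝ)^(ν * ((k:ℝ) - 1)) * dLp N p (fun z => dBlock N P ((k:ℤ)-1) f (latPt N z))
  else
    (∑' k : ℕ, ((2:ℝ)^(ν * ((k:ℝ) - 1)) *
      dLp N p (fun z => dBlock N P ((k:ℤ)-1) f (latPt N z))) ^ q.toReal) ^ (1/q.toReal)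

/-- The `C^{-ν}` (Besov–Hölder) norm of the extension `Ex f`:
`sup_{k ≥ -1} 2^{-νk} ‖δ_k (Ex f)‖_{L^∞(𝕋²)}`. -/
def holderNeg (N : ℕ) [NeZero N] (P : LPpartition) (ν : ℝ) (f : Lat N → ℂ) : ℝ :=
  ⨆ k : ℕ, (2:ℝ)^(-ν * ((k:ℝ) - 1)) * ⨆ x : ℝ × ℝ, ‖dBlock N P ((k:ℤ)-1) f x‖

/-- Spin values. -/
def spin (s : Bool) : ℝ := if s then 1 else -1

/-- Hamiltonian `H(σ) = (β/2) Σ_{x,y} k(x-y) σ_x σ_y + b Σ_x σ_x`. -/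
def hamil (N : ℕ) [NeZero N] (kk : Lat N → ℝ) (β b : ℝ) (σ : Lat N → ℝ) : ℝ :=
  β/2 * ∑ x : Lat N, ∑ y : Lat N, kk (x - y) * σ x * σ y + b * ∑ x : Lat N, σ x

/-- Gibbs expectation `E^γ_{β,b}[F]`. -/
def gibbsE (N : ℕ) [NeZero N] (kk : Lat N → ℝ) (β b : ℝ) (F : (Lat N → ℝ) → ℝ) : ℝ :=
  (∑ s : Lat N → Bool, Real.exp (hamil N kk β b (fun x => spin (s x))) * F (fun x => spin (s x))) /
  (∑ s : Lat N → Bool, Real.exp (hamil N kk β b (fun x => spin (s x))))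

/-- The profile `𝔎 : ℝ² → [0,1]`, twice differentiable, radial, supported in `B(0,3)`,
not identically zero. -/
structure KacProfile : Type where
  f : ℝ × ℝ → ℝ
  smooth : ContDiff ℝ 2 f
  mem : ∀ x, f x ∈ Set.Icc (0:ℝ) 1
  radial : ∀ x y : ℝ × ℝ, enorm2 x = enorm2 y → f x = f y
  supp : ∀ x : ℝ × ℝ, 3 < enorm2 x → f x = 0
  nontriv : ∃ x, f x ≠ 0

/-- The Kac kernel `k_γ(z) = c γ² 𝔎(γ·z)` (shortest periodic representative), `k_γ(0)=0`. -/
def kGamma (𝔎 : KacProfile) (N : ℕ) (c γ : ℝ) (z : Lat N) : ℝ :=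
  if z = 0 then 0 else c * γ^2 * 𝔎.f (γ * (latRep N z.1 : ℝ), γ * (latRep N z.2 : ℝ))

/-- `γ = N^{-1/2}`, so that `γ² = ε = 1/N`. -/
def gam (N : ℕ) : ℝ := Real.sqrt ((N : ℝ)⁻¹)

/-- Fourier transform `K̂_γ(ω) = Σ_z k_γ(z) e^{-iπ ω·(εz)}` of the macroscopic kernel
(real, since the kernel is even). -/
def kHat (N : ℕ) [NeZero N] (kk : Lat N → ℝ) (ω : ℤ × ℤ) : ℝ :=
  ∑ z : Lat N, kk z *
    Real.cos (Real.pi * ((ω.1 : ℝ) * (latRep N z.1 : ℝ) / N + (ω.2 : ℝ) * (latRep N z.2 : ℝ) / N))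

/-- The renormalisation constant
`𝔠_γ = (1/4) Σ_{ω ∈ Λ_N \ {0}} |K̂_γ(ω)|² / (γ^{-2} (1-K̂_γ(ω)))`. -/
def cGamma (N : ℕ) [NeZero N] (kk : Lat N → ℝ) (γ : ℝ) : ℝ :=
  (1/4) * ∑ z : Lat N, if z = (0 : Lat N) then 0 else
    (kHat N kk (latRep2 N z))^2 / ((γ^2)⁻¹ * (1 - kHat N kk (latRep2 N z)))

/-- Critical inverse temperature `β = 1 + γ²(𝔠_γ + A)`. -/
def betaCrit (𝔎 : KacProfile) (N : ℕ) [NeZero N] (c A : ℝ) : ℝ :=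
  1 + (gam N)^2 * (cGamma N (kGamma 𝔎 N c (gam N)) (gam N) + A)

/-- The fluctuation field `X_γ(x) = γ^{-1} Σ_z k_γ(ε^{-1}x - z) σ_z`, as a function on `Λ_N`. -/
def fluct (N : ℕ) [NeZero N] (kk : Lat N → ℝ) (γ : ℝ) (σ : Lat N → ℝ) (z : Lat N) : ℝ :=
  γ⁻¹ * ∑ y : Lat N, kk (z - y) * σ y

/-- The rescaled step field `γ^{-1} σ_{⌊ε^{-1}x⌋}` on the torus (without the `γ^{-1}`). -/
def stepField (N : ℕ) (σ : Lat N → ℝ) (x : ℝ × ℝ) : ℝ :=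
  σ (((⌊(N : ℝ) * x.1⌋ : ℤ) : ZMod (2*N)), ((⌊(N : ℝ) * x.2⌋ : ℤ) : ZMod (2*N)))

/-- Fourier coefficient on the torus: `ĝ(ω) = ∫_{𝕋²} g(x) e^{-iπω·x} dx`. -/
def cFT (g : ℝ × ℝ → ℂ) (ω : ℤ × ℤ) : ℂ :=
  ∫ x in box, g x * (starRingEnd ℂ) (eW ω x)


/-! ### Additional definitions -/

/-- Nearest-neighbour Dirichlet sum `Σ_{x,y ∈ Λ_ε, |x-y|=ε} ε² (f(y)-f(x))²`. -/
def nnSum (N : ℕ) [NeZero N] (f : Lat N → ℝ) : ℝ :=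
  ∑ x : Lat N, ((N : ℝ)^2)⁻¹ *
    ((f (x + (1, 0)) - f x)^2 + (f (x + (0, 1)) - f x)^2 +
     (f (x - (1, 0)) - f x)^2 + (f (x - (0, 1)) - f x)^2)

/-- The `d`-dimensional periodic lattice `Λ_N^d`. -/
abbrev LatD (d N : ℕ) : Type := Fin d → ZMod (2*N)

/-- Discrete `L^p` norm on `Λ_ε^d`, `p ∈ [1,∞]`. -/
def dLpD (d N : ℕ) [NeZero N] (p : ℝ≥0∞) (f : LatD d N → ℂ) : ℝ :=
  if p = ∞ then ⨆ z : LatD d N, ‖f z‖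
  else (∑ z : LatD d N, ((N : ℝ)^d)⁻¹ * ‖f z‖ ^ p.toReal) ^ (1/p.toReal)

/-- `Σ_{w ∈ Λ_N^d} χ(λ w) e_w`, evaluated at the lattice point `ε z ∈ Λ_ε^d`. -/
def gLam (d N : ℕ) [NeZero N] (χ : (Fin d → ℝ) → ℝ) (lam : ℝ) (z : LatD d N) : ℂ :=
  ∑ w : LatD d N, ((χ (fun i => lam * (latRep N (w i) : ℝ)) : ℝ) : ℂ) *
    Complex.exp ((Real.pi : ℂ) * Complex.I *
      ((∑ i : Fin d, (latRep N (w i) : ℝ) * ((latRep N (z i) : ℝ) / N) : ℝ) : ℂ))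

/-- Second partial derivative of `φ` in directions `v, w`. -/
def pd2 (φ : ℝ × ℝ → ℝ) (v w : ℝ × ℝ) : ℝ × ℝ → ℝ :=
  fun x => fderiv ℝ (fun y => fderiv ℝ φ y v) x w

/-- `max_{i,j ∈ {1,2}} ‖∂_i ∂_j φ‖_{L^∞}`. -/
def secondDerivBound (φ : ℝ × ℝ → ℝ) : ℝ :=
  max (max (⨆ x : ℝ × ℝ, |pd2 φ (1,0) (1,0) x|) (⨆ x : ℝ × ℝ, |pd2 φ (1,0) (0,1) x|))
      (max (⨆ x : ℝ × ℝ, |pd2 φ (0,1) (1,0) x|) (⨆ x : ℝ × ℝ, |pd2 φ (0,1) (0,1) x|))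

/-- The Littlewood–Paley block `δ_k g` of a function on the torus. -/
def cBlock (P : LPpartition) (k : ℤ) (g : ℝ × ℝ → ℂ) (x : ℝ × ℝ) : ℂ :=
  (1/4 : ℂ) * ∑' ω : ℤ × ℤ, ((LPchi P k ((ω.1 : ℝ), (ω.2 : ℝ)) : ℝ) : ℂ) * cFT g ω * eW ω x

/-- Besov norm `‖g‖_{B^ν_{1,1}(𝕋²)} = Σ_{k ≥ -1} 2^{νk} ‖δ_k g‖_{L¹(𝕋²)}`. -/
def cBesov11 (P : LPpartition) (ν : ℝ) (g : ℝ × ℝ → ℂ) : ℝ :=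
  ∑' k : ℕ, (2:ℝ) ^ (ν * ((k:ℝ) - 1)) * ∫ x in box, ‖cBlock P ((k:ℤ)-1) g x‖

open scoped NNReal

lemma latRep_cast (N : ℕ) [NeZero N] (m : ℤ) (h1 : -(N:ℤ) < m) (h2 : m ≤ N) :
    latRep N (m : ZMod (2*N)) = m := by
  have hN : 0 < (N:ℤ) := by exact_mod_cast Nat.pos_of_ne_zero (NeZero.ne N)
  have hv : (((m : ZMod (2*N)).val : ℕ) : ℤ) = m % ((2*N : ℕ) : ℤ) := ZMod.val_intCast m
  unfold latRep
  rw [hv]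
  push_cast
  rcases le_or_gt 0 m with hm | hm
  · rw [Int.emod_eq_of_lt hm (by omega)]
    simp [h2]
  · have : m % (2 * (N:ℤ)) = m + 2 * N := by
      rw [← Int.add_emod_right, Int.emod_eq_of_lt (by omega) (by omega)]
    rw [this, if_neg (by omega)]
    ring

lemma latRep_mem (N : ℕ) [NeZero N] (v : ZMod (2*N)) :
    latRep N v ∈ Finset.Ioc (-(N:ℤ)) N := by
  have := ZMod.val_lt v
  rw [Finset.mem_Ioc]
  unfold latRep
  split_ifs with h <;> constructor <;> omega

lemma cast_latRep (N : ℕ) [NeZero N] (v : ZMod (2*N)) :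
    ((latRep N v : ℤ) : ZMod (2*N)) = v := by
  have h0 : ((2 * (N:ZMod (2*N)))) = 0 := by
    have := ZMod.natCast_self (2*N)
    push_cast at this
    exact this
  unfold latRep
  split_ifs with h
  · simp
  · push_cast
    rw [h0]
    simp

lemma sum_lat (N : ℕ) [NeZero N] (F : ℤ → ℤ → ℝ) :
    ∑ z : Lat N, F (latRep N z.1) (latRep N z.2) =
      ∑ p ∈ Finset.Ioc (-(N:ℤ)) N ×ˢ Finset.Ioc (-(N:ℤ)) N, F p.1 p.2 := by
  refine Finset.sum_nbij' (fun z => (latRep N z.1, latRep N z.2))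
    (fun p => ((p.1 : ZMod (2*N)), (p.2 : ZMod (2*N)))) ?_ ?_ ?_ ?_ ?_
  · intro z _
    exact Finset.mk_mem_product (latRep_mem N z.1) (latRep_mem N z.2)
  · intro p _
    exact Finset.mem_univ _
  · intro z _
    simp [cast_latRep]
  · intro p hp
    rw [Finset.mem_product, Finset.mem_Ioc, Finset.mem_Ioc] at hp
    ext
    · exact latRep_cast N _ hp.1.1 hp.1.2
    · exact latRep_cast N _ hp.2.1 hp.2.2
  · intro z _
    rfl

/-- `1 - cos (y - x) ≤ 2 (1 - cos x) + 2 (1 - cos y)`. -/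
lemma one_sub_cos_sub (x y : ℝ) :
    1 - Real.cos (y - x) ≤ 2 * (1 - Real.cos x) + 2 * (1 - Real.cos y) := by
  rw [Real.cos_sub]
  have h1 := Real.sin_sq_add_cos_sq x
  have h2 := Real.sin_sq_add_cos_sq y
  nlinarith [sq_nonneg (Real.sin x + Real.sin y), sq_nonneg (Real.cos x + Real.cos y - 2)]

lemma row_bound (θ s : ℝ) (M : ℤ) (h d : ℕ) (hd : d ≤ h) :
    (h : ℝ) / 4 * (1 - Real.cos (θ * d)) ≤
      ∑ j ∈ Finset.range (2*h), (1 - Real.cos (θ * ((M + (j:ℤ) : ℤ) : ℝ) + s)) := by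
  set g : ℕ → ℝ := fun j => 1 - Real.cos (θ * ((M + (j:ℤ) : ℤ) : ℝ) + s) with hg
  have g0 : ∀ j, 0 ≤ g j := fun j => sub_nonneg.2 (Real.cos_le_one _)
  have hA : ∑ j ∈ Finset.range h, g j ≤ ∑ j ∈ Finset.range (2*h), g j :=
    Finset.sum_le_sum_of_subset_of_nonneg (by
      intro x hx; rw [Finset.mem_range] at *; omega) (fun j _ _ => g0 j)
  have hB : ∑ j ∈ Finset.range h, g (j + d) ≤ ∑ j ∈ Finset.range (2*h), g j := by
    rw [← Finset.sum_image (f := g) (g := fun j => j + d) (s := Finset.range h)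
      (by intro a _ b _ hab; simpa using hab)]
    refine Finset.sum_le_sum_of_subset_of_nonneg ?_ (fun j _ _ => g0 j)
    intro x hx
    rw [Finset.mem_image] at hx
    obtain ⟨a, ha, rfl⟩ := hx
    rw [Finset.mem_range] at *
    omega
  have hC : ∑ j ∈ Finset.range h, (1 - Real.cos (θ * d)) ≤
      ∑ j ∈ Finset.range h, (2 * g j + 2 * g (j + d)) := by
    refine Finset.sum_le_sum fun j _ => ?_
    have := one_sub_cos_sub (θ * ((M + (j:ℤ) : ℤ) : ℝ) + s) (θ * ((M + ((j + d : ℕ):ℤ) : ℤ) : ℝ) + s)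
    have e : θ * ((M + ((j + d : ℕ):ℤ) : ℤ) : ℝ) + s - (θ * ((M + (j:ℤ) : ℤ) : ℝ) + s) = θ * d := by
      push_cast; ring
    rw [e] at this
    exact this
  rw [Finset.sum_add_distrib, ← Finset.mul_sum, ← Finset.mul_sum] at hC
  simp only [Finset.sum_const, Finset.card_range, nsmul_eq_mul] at hC
  linarith

lemma exists_d (θ : ℝ) (hθ : |θ| ≤ Real.pi) (h : ℕ) :
    ∃ d : ℕ, d ≤ h ∧ 1 / 5 * min ((θ * h)^2) 1 ≤ 1 - Real.cos (θ * d) := by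
  have hpi := Real.pi_pos
  have hpi2 : Real.pi ^ 2 ≤ 10 := by nlinarith [Real.pi_lt_d2, Real.pi_gt_three]
  have key : ∀ x : ℝ, |x| ≤ Real.pi → 1/5 * x^2 ≤ 1 - Real.cos x := by
    intro x hx
    have := Real.cos_le_one_sub_mul_cos_sq hx
    have h5 : 1/5 ≤ 2 / Real.pi^2 := by
      rw [le_div_iff₀ (by positivity)]; linarith
    have := mul_le_mul_of_nonneg_right h5 (sq_nonneg x)
    linarith
  rcases le_or_gt (|θ| * h) Real.pi with hc | hc
  · refine ⟨h, le_rfl, ?_⟩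
    have := key (θ * h) (by rw [abs_mul, Nat.abs_cast]; exact hc)
    linarith [min_le_left ((θ * h)^2) 1]
  · have hθ0 : 0 < |θ| := by
      rcases (abs_nonneg θ).eq_or_lt with e | e
      · rw [← e] at hc; simp at hc; linarith
      · exact e
    set x := Real.pi / |θ| with hx
    have hx1 : 1 ≤ x := by rw [hx, le_div_iff₀ hθ0]; linarith
    have hxe : |θ| * x = Real.pi := by rw [hx]; field_simp
    have hf1 : (⌊x⌋₊ : ℝ) ≤ x := Nat.floor_le (by linarith)
    have hf2 : x < ⌊x⌋₊ + 1 := Nat.lt_floor_add_one x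
    have hf3 : 1 ≤ ⌊x⌋₊ := Nat.le_floor (by simpa using hx1)
    have hf4 : (1:ℝ) ≤ ⌊x⌋₊ := by exact_mod_cast hf3
    refine ⟨⌊x⌋₊, ?_, ?_⟩
    · have : x < h := by rw [hx, div_lt_iff₀ hθ0]; linarith
      have : (⌊x⌋₊ : ℝ) < h := by linarith
      exact_mod_cast this.le
    · have hle : |θ * ⌊x⌋₊| ≤ Real.pi := by
        rw [abs_mul, Nat.abs_cast, ← hxe]
        gcongr
      have hge : Real.pi / 2 ≤ |θ * ⌊x⌋₊| := by
        rw [abs_mul, Nat.abs_cast, ← hxe]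
        nlinarith
      have h1 := key _ hle
      have h2 : 1 ≤ (θ * ⌊x⌋₊)^2 := by
        rw [← sq_abs]
        nlinarith [Real.pi_gt_three]
      linarith [min_le_right ((θ * h)^2) 1]

/-- Abstract lower bound for the sum over a box on which the weight is at least `a`. -/
lemma box_bound (N : ℕ) (w : ℤ → ℤ → ℝ) (hw : ∀ m n, 0 ≤ w m n) (a : ℝ) (ha : 0 ≤ a)
    (M M' : ℤ) (h : ℕ) (hM : -(N:ℤ) < M) (hM2 : M + 2*h ≤ N + 1)
    (hM' : -(N:ℤ) < M') (hM2' : M' + 2*h ≤ N + 1)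
    (hwa : ∀ i j : ℕ, i < 2*h → j < 2*h → a ≤ w (M + i) (M' + j))
    (θ₁ θ₂ : ℝ) (hθ : |θ₁| ≤ Real.pi) :
    a * ((h:ℝ)^2 / 10 * min ((θ₁ * h)^2) 1) ≤
      ∑ p ∈ Finset.Ioc (-(N:ℤ)) N ×ˢ Finset.Ioc (-(N:ℤ)) N,
        w p.1 p.2 * (1 - Real.cos (θ₁ * p.1 + θ₂ * p.2)) := by
  obtain ⟨d, hd, hd2⟩ := exists_d θ₁ hθ h
  have c0 : ∀ x : ℝ, 0 ≤ 1 - Real.cos x := fun x => sub_nonneg.2 (Real.cos_le_one _)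
  set G : ℤ × ℤ → ℝ := fun p => w p.1 p.2 * (1 - Real.cos (θ₁ * p.1 + θ₂ * p.2)) with hG
  have G0 : ∀ p, 0 ≤ G p := fun p => mul_nonneg (hw _ _) (c0 _)
  let e : ℕ × ℕ → ℤ × ℤ := fun q => (M + q.1, M' + q.2)
  have he : Function.Injective e := by
    rintro ⟨a, b⟩ ⟨a', b'⟩ hab
    simp only [e, Prod.mk.injEq] at hab ⊢
    omega
  have h1 : ∑ q ∈ Finset.range (2*h) ×ˢ Finset.range (2*h), G (e q) ≤
      ∑ p ∈ Finset.Ioc (-(N:ℤ)) N ×ˢ Finset.Ioc (-(N:ℤ)) N, G p := by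
    rw [← Finset.sum_image (f := G) (g := e) (fun a _ b _ hab => he hab)]
    refine Finset.sum_le_sum_of_subset_of_nonneg ?_ (fun j _ _ => G0 j)
    intro x hx
    rw [Finset.mem_image] at hx
    obtain ⟨q, hq, rfl⟩ := hx
    simp only [Finset.mem_product, Finset.mem_range, Finset.mem_Ioc, e] at *
    omega
  refine le_trans ?_ h1
  rw [Finset.sum_product_right]
  have h2 : ∀ j ∈ Finset.range (2*h), a * ((h:ℝ)/4 * (1 - Real.cos (θ₁ * d))) ≤
      ∑ i ∈ Finset.range (2*h), G (e (i, j)) := by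
    intro j hj
    have := row_bound θ₁ (θ₂ * ((M' + j : ℤ) : ℝ)) M h d hd
    refine (mul_le_mul_of_nonneg_left this ha).trans ?_
    rw [Finset.mul_sum]
    refine Finset.sum_le_sum fun i hi => ?_
    exact mul_le_mul_of_nonneg_right (hwa i j (Finset.mem_range.1 hi) (Finset.mem_range.1 hj)) (c0 _)
  refine le_trans ?_ (Finset.sum_le_sum h2)
  simp only [Finset.sum_const, Finset.card_range, nsmul_eq_mul]
  have hh : (0:ℝ) ≤ h := Nat.cast_nonneg h
  have := mul_le_mul_of_nonneg_left hd2 (show 0 ≤ a * (h:ℝ)^2 / 2 by positivity)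
  push_cast
  linarith

lemma abs_le_enorm2 (x : ℝ × ℝ) : |x.1| ≤ enorm2 x ∧ |x.2| ≤ enorm2 x :=
  ⟨Real.abs_le_sqrt (by nlinarith [sq_nonneg x.2]), Real.abs_le_sqrt (by nlinarith [sq_nonneg x.1])⟩

lemma profile_swap (𝔎 : KacProfile) (x y : ℝ) : 𝔎.f (x, y) = 𝔎.f (y, x) :=
  𝔎.radial _ _ (by simp [enorm2, add_comm])

/-- A square on which the profile is bounded below. -/
lemma exists_box (𝔎 : KacProfile) : ∃ a r p q : ℝ, 0 < a ∧ 0 < r ∧ r ≤ 1 ∧ |p| ≤ 3 ∧ |q| ≤ 3 ∧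
    ∀ x y : ℝ, |x - p| ≤ r → |y - q| ≤ r → a ≤ 𝔎.f (x, y) := by
  obtain ⟨x₀, hx₀⟩ := 𝔎.nontriv
  have hpos : 0 < 𝔎.f x₀ := lt_of_le_of_ne (𝔎.mem x₀).1 (Ne.symm hx₀)
  have h3 : enorm2 x₀ ≤ 3 := by
    by_contra hcon
    exact hx₀ (𝔎.supp x₀ (not_le.1 hcon))
  have hc : Continuous 𝔎.f := 𝔎.smooth.continuous
  obtain ⟨δ, hδ, hδ'⟩ := Metric.continuous_iff.1 hc x₀ (𝔎.f x₀ / 2) (by linarith)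
  refine ⟨𝔎.f x₀ / 2, min (δ/2) 1, x₀.1, x₀.2, by linarith, by positivity, min_le_right _ _,
    (abs_le_enorm2 x₀).1.trans h3, (abs_le_enorm2 x₀).2.trans h3, ?_⟩
  intro x y hx hy
  have hx' := hx.trans (min_le_left _ _)
  have hy' := hy.trans (min_le_left _ _)
  have := hδ' (x, y) (by
    rw [Prod.dist_eq, Real.dist_eq, Real.dist_eq]
    exact max_lt (by simp only; linarith) (by simp only; linarith))
  rw [Real.dist_eq, abs_lt] at this
  linarith [this.1]

lemma sum_le_card (𝔎 : KacProfile) (N : ℕ) (γ : ℝ) (hγ : 0 < γ) (hγ1 : γ ≤ 1) :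
    ∑ p ∈ Finset.Ioc (-(N:ℤ)) N ×ˢ Finset.Ioc (-(N:ℤ)) N, 𝔎.f (γ * (p.1:ℝ), γ * (p.2:ℝ))
      ≤ 49 / γ^2 := by
  set K : ℕ := ⌊3/γ⌋₊ with hK
  have hKle : (K:ℝ) ≤ 3/γ := Nat.floor_le (by positivity)
  set S : Finset (ℤ × ℤ) := Finset.Icc (-(K:ℤ)) K ×ˢ Finset.Icc (-(K:ℤ)) K with hS
  have hcard : (S.card : ℝ) = (2*K+1)^2 := by
    rw [hS, Finset.card_product, Int.card_Icc]
    have : ((K:ℤ) + 1 - (-(K:ℤ))).toNat = 2*K+1 := by omega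
    rw [this]; push_cast; ring
  have habs : ∀ m : ℤ, |γ * (m:ℝ)| ≤ 3 → m ∈ Finset.Icc (-(K:ℤ)) K := by
    intro m hm
    rw [abs_mul, abs_of_pos hγ] at hm
    have h1 : ((m.natAbs : ℕ) : ℝ) ≤ 3/γ := by
      rw [Nat.cast_natAbs, Int.cast_abs, le_div_iff₀ hγ]; linarith
    have h2 : m.natAbs ≤ K := Nat.le_floor h1
    rw [Finset.mem_Icc]; omega
  have hf : ∀ p : ℤ × ℤ, p ∉ S → 𝔎.f (γ * (p.1:ℝ), γ * (p.2:ℝ)) = 0 := by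
    intro p hp
    apply 𝔎.supp
    by_contra hcon
    have hcon := not_lt.1 hcon
    have hab := abs_le_enorm2 (γ * (p.1:ℝ), γ * (p.2:ℝ))
    exact hp (Finset.mem_product.2 ⟨habs _ (hab.1.trans hcon), habs _ (hab.2.trans hcon)⟩)
  calc _ ≤ ∑ p ∈ Finset.Ioc (-(N:ℤ)) N ×ˢ Finset.Ioc (-(N:ℤ)) N, (if p ∈ S then (1:ℝ) else 0) := by
        refine Finset.sum_le_sum fun p _ => ?_
        split_ifs with h
        · exact (𝔎.mem _).2
        · exact (hf p h).le
    _ ≤ S.card := by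
        rw [← Finset.sum_filter, Finset.sum_const, nsmul_eq_mul, mul_one]
        exact_mod_cast Finset.card_le_card (fun x hx => (Finset.mem_filter.1 hx).2)
    _ ≤ 49 / γ^2 := by
        rw [hcard]
        have : (2*(K:ℝ)+1) ≤ 7/γ := by
          have : 1 ≤ 1/γ := by rw [le_div_iff₀ hγ]; linarith
          have e : 7/γ = 2*(3/γ) + 1/γ := by ring
          linarith
        calc (2*(K:ℝ)+1)^2 ≤ (7/γ)^2 := by gcongr
          _ = 49/γ^2 := by rw [div_pow]; norm_num

/-- Choice of the integer interval. -/
lemma exists_interval (N : ℕ) (γ r p : ℝ) (hγ : 0 < γ) (hN : (N:ℝ) * γ^2 = 1) (hr : 0 < r) (hr1 : r ≤ 1)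
    (hp : |p| ≤ 3) (hγ8 : γ ≤ 1/8) :
    ∃ M : ℤ, -(N:ℤ) < M ∧ M + 2*(⌊r/γ⌋₊:ℤ) ≤ N + 1 ∧
      ∀ i : ℕ, i < 2*⌊r/γ⌋₊ → |γ * ((M + (i:ℤ) : ℤ):ℝ) - p| ≤ r := by
  set h := ⌊r/γ⌋₊ with hh
  have hle : (h:ℝ) ≤ r/γ := Nat.floor_le (by positivity)
  have hle' : γ * h ≤ r := by rw [le_div_iff₀ hγ] at hle; linarith
  rw [abs_le] at hp
  have hNγ : 8 ≤ γ * N := by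
    have : (γ * N) * γ = 1 := by rw [← hN]; ring
    by_contra hcon
    nlinarith
  refine ⟨⌈(p-r)/γ⌉, ?_, ?_, ?_⟩
  all_goals
    have c1 : (p-r)/γ ≤ ⌈(p-r)/γ⌉ := Int.le_ceil _
    have c2 : (⌈(p-r)/γ⌉:ℝ) < (p-r)/γ + 1 := Int.ceil_lt_add_one _
    have e : γ * ((p-r)/γ) = p - r := by field_simp
    set M := ⌈(p-r)/γ⌉ with hM
    have d1 : p - r ≤ γ * M := by rw [← e]; gcongr
    have d2 : γ * M ≤ p - r + γ := by
      have := mul_le_mul_of_nonneg_left c2.le hγ.le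
      linarith
  · have : γ * (-(N:ℝ)) < γ * M := by linarith
    have := lt_of_mul_lt_mul_left this hγ.le
    exact_mod_cast this
  · have : γ * ((M:ℝ) + 2*h) ≤ γ * (N+1) := by linarith
    have := le_of_mul_le_mul_left this hγ
    exact_mod_cast this
  · intro i hi
    have hi' : (i:ℝ) + 1 ≤ 2 * h := by exact_mod_cast hi
    have hi2 : γ * ((i:ℝ)+1) ≤ γ * (2*h) := by gcongr
    have hi0 : 0 ≤ γ * (i:ℝ) := by positivity
    push_cast
    rw [abs_le]
    constructor <;> linarith

lemma dir_bound (a r γ ω : ℝ) (h : ℕ) (N : ℕ) (ha : 0 < a) (hr : 0 < r) (hr1 : r ≤ 1) (hγ : 0 < γ)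
    (hN : (N:ℝ) * γ^2 = 1) (hh : r / (2*γ) ≤ h) :
    a * r^4 / (160 * γ^2) * min (γ^2 * ω^2) 1 ≤
      a * ((h:ℝ)^2 / 10 * min ((Real.pi * ω / N * h)^2) 1) := by
  have hNi : (N:ℝ) = 1/γ^2 := by field_simp; linarith
  have hh2 : (r / (2*γ))^2 ≤ (h:ℝ)^2 := by gcongr
  have hπ : 1 ≤ Real.pi^2 := by nlinarith [Real.pi_gt_three]
  have hm : r^2/4 * min (γ^2 * ω^2) 1 ≤ min ((Real.pi * ω / N * h)^2) 1 := by
    refine le_min ?_ ?_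
    · have e : (Real.pi * ω / N * h)^2 = Real.pi^2 * (ω^2 * γ^4 * (h:ℝ)^2) := by
        rw [hNi]; field_simp
      calc r^2/4 * min (γ^2 * ω^2) 1 ≤ r^2/4 * (γ^2 * ω^2) := by gcongr; exact min_le_left _ _
        _ = 1 * (ω^2 * γ^4 * (r / (2*γ))^2) := by field_simp; ring
        _ ≤ Real.pi^2 * (ω^2 * γ^4 * (h:ℝ)^2) := by gcongr
        _ = _ := e.symm
    · have : min (γ^2 * ω^2) 1 ≤ 1 := min_le_right _ _
      have : (0:ℝ) ≤ min (γ^2 * ω^2) 1 := by positivity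
      nlinarith
  calc a * r^4 / (160 * γ^2) * min (γ^2 * ω^2) 1
      = a * ((r / (2*γ))^2 / 10 * (r^2/4 * min (γ^2 * ω^2) 1)) := by field_simp; ring
    _ ≤ _ := by gcongr

/-- `1 - K̂_γ(ω) ≥ c (γ²|ω|² ∧ 1)`. -/
theorem statement12 (𝔎 : KacProfile) :
    ∃ cc : ℝ, 0 < cc ∧ ∃ γ₀ : ℝ, 0 < γ₀ ∧ ∀ (N : ℕ) [NeZero N], gam N ≤ γ₀ →
      ∀ c : ℝ, 0 < c → (∑ z : Lat N, kGamma 𝔎 N c (gam N) z) = 1 →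
      ∀ z : Lat N,
        cc * min ((gam N)^2 * ((latRep N z.1 : ℝ)^2 + (latRep N z.2 : ℝ)^2)) 1 ≤
          1 - kHat N (kGamma 𝔎 N c (gam N)) (latRep2 N z) := by
  obtain ⟨a, r, p, q, ha, hr, hr1, hp, hq, hbox⟩ := exists_box 𝔎
  refine ⟨a * r^4 / (49 * 320), by positivity, min (1/8) (r/2), by positivity, ?_⟩
  intro N _ hγ₀ c hc hsum ω
  have hNpos : (0:ℝ) < N := by exact_mod_cast Nat.pos_of_ne_zero (NeZero.ne N)
  set γ := gam N with hγdef
  have hγ : 0 < γ := Real.sqrt_pos.2 (inv_pos.2 hNpos)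
  have hN : (N:ℝ) * γ^2 = 1 := by
    rw [hγdef, gam, Real.sq_sqrt (by positivity)]; field_simp
  have hγ8 : γ ≤ 1/8 := hγ₀.trans (min_le_left _ _)
  have hγr : γ ≤ r/2 := hγ₀.trans (min_le_right _ _)
  have l0 : latRep N 0 = 0 := by simp [latRep]
  set ω₁ := latRep N ω.1 with hω₁
  set ω₂ := latRep N ω.2 with hω₂
  set B := Finset.Ioc (-(N:ℤ)) N with hB
  -- lower bound on the normalisation
  have hcγ : 1 / 49 ≤ c := by
    have h1 : (1:ℝ) ≤ ∑ z : Lat N, c * γ^2 * 𝔎.f (γ * (latRep N z.1 : ℝ), γ * (latRep N z.2 : ℝ)) := by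
      rw [← hsum]
      refine Finset.sum_le_sum fun z _ => ?_
      unfold kGamma
      split_ifs
      · exact mul_nonneg (by positivity) (𝔎.mem _).1
      · exact le_rfl
    rw [← Finset.mul_sum, sum_lat N (fun m n => 𝔎.f (γ * (m:ℝ), γ * (n:ℝ)))] at h1
    have h2 := sum_le_card 𝔎 N γ hγ (by linarith)
    have h3 := h1.trans (mul_le_mul_of_nonneg_left h2 (by positivity : 0 ≤ c * γ^2))
    have e : c * γ^2 * (49/γ^2) = 49 * c := by field_simp
    rw [e] at h3
    linarith
  -- rewrite the difference
  set T : ℝ := ∑ p ∈ B ×ˢ B, 𝔎.f (γ * (p.1:ℝ), γ * (p.2:ℝ)) *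
    (1 - Real.cos ((Real.pi * ω₁ / N) * p.1 + (Real.pi * ω₂ / N) * p.2)) with hT
  have hdiff : 1 - kHat N (kGamma 𝔎 N c γ) (latRep2 N ω) = c * γ^2 * T := by
    have e0 : 1 - kHat N (kGamma 𝔎 N c γ) (latRep2 N ω) =
        (∑ z : Lat N, kGamma 𝔎 N c γ z) - kHat N (kGamma 𝔎 N c γ) (latRep2 N ω) := by rw [hsum]
    rw [e0, hT, hB, ← sum_lat N (fun m n => 𝔎.f (γ * (m:ℝ), γ * (n:ℝ)) *
      (1 - Real.cos ((Real.pi * ω₁ / N) * m + (Real.pi * ω₂ / N) * n))), Finset.mul_sum, kHat,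
      ← Finset.sum_sub_distrib]
    refine Finset.sum_congr rfl fun z _ => ?_
    have e : Real.pi * (((latRep2 N ω).1 : ℝ) * (latRep N z.1 : ℝ) / N +
        ((latRep2 N ω).2 : ℝ) * (latRep N z.2 : ℝ) / N) =
        (Real.pi * ω₁ / N) * (latRep N z.1 : ℝ) + (Real.pi * ω₂ / N) * (latRep N z.2 : ℝ) := by
      simp only [latRep2, ← hω₁, ← hω₂]; ring
    rw [e]
    by_cases hz : z = 0
    · subst hz
      simp [l0]
    · simp only [kGamma, if_neg hz]
      ring
  set h := ⌊r/γ⌋₊ with hh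
  have hhle : r / (2*γ) ≤ h := by
    have h1 : r/γ < h + 1 := Nat.lt_floor_add_one _
    have h2 : 1 ≤ r/(2*γ) := by rw [le_div_iff₀ (by positivity)]; linarith
    have h3 : r/γ = r/(2*γ) + r/(2*γ) := by field_simp; ring
    linarith
  obtain ⟨M, hM1, hM2, hM3⟩ := exists_interval N γ r p hγ hN hr hr1 hp hγ8
  obtain ⟨M', hM1', hM2', hM3'⟩ := exists_interval N γ r q hγ hN hr hr1 hq hγ8
  have hang : ∀ v : ZMod (2*N), |Real.pi * (latRep N v : ℝ) / N| ≤ Real.pi := by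
    intro v
    have hm := Finset.mem_Ioc.1 (latRep_mem N v)
    have h1 : |(latRep N v : ℝ)| ≤ N := by
      rw [abs_le]
      exact ⟨by exact_mod_cast hm.1.le, by exact_mod_cast hm.2⟩
    rw [abs_div, abs_mul, abs_of_pos Real.pi_pos, Nat.abs_cast, div_le_iff₀ hNpos]
    exact mul_le_mul_of_nonneg_left h1 Real.pi_pos.le
  have hwa : ∀ i j : ℕ, i < 2*h → j < 2*h →
      a ≤ 𝔎.f (γ * ((M + (i:ℤ) : ℤ):ℝ), γ * ((M' + (j:ℤ) : ℤ):ℝ)) :=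
    fun i j hi hj => hbox _ _ (hM3 i hi) (hM3' j hj)
  have hT1 := box_bound N (fun m n => 𝔎.f (γ * (m:ℝ), γ * (n:ℝ))) (fun m n => (𝔎.mem _).1) a ha.le
    M M' h hM1 hM2 hM1' hM2' hwa (Real.pi * ω₁ / N) (Real.pi * ω₂ / N) (hang _)
  have hT2 := box_bound N (fun m n => 𝔎.f (γ * (m:ℝ), γ * (n:ℝ))) (fun m n => (𝔎.mem _).1) a ha.le
    M M' h hM1 hM2 hM1' hM2' hwa (Real.pi * ω₂ / N) (Real.pi * ω₁ / N) (hang _)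
  have hswap : ∑ p ∈ B ×ˢ B, 𝔎.f (γ * (p.1:ℝ), γ * (p.2:ℝ)) *
      (1 - Real.cos ((Real.pi * ω₂ / N) * p.1 + (Real.pi * ω₁ / N) * p.2)) = T := by
    rw [hT, Finset.sum_product, Finset.sum_product_right]
    refine Finset.sum_congr rfl fun m _ => Finset.sum_congr rfl fun n _ => ?_
    simp only
    rw [profile_swap, add_comm]
  have hT1' : _ ≤ T := (dir_bound a r γ ω₁ h N ha hr hr1 hγ hN hhle).trans hT1
  have hT2' : _ ≤ T := (dir_bound a r γ ω₂ h N ha hr hr1 hγ hN hhle).trans (hT2.trans hswap.le)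
  have hmin : min (γ^2 * ((ω₁:ℝ)^2 + (ω₂:ℝ)^2)) 1 ≤
      min (γ^2 * (ω₁:ℝ)^2) 1 + min (γ^2 * (ω₂:ℝ)^2) 1 := by
    have p1 : 0 ≤ γ^2 * (ω₁:ℝ)^2 := by positivity
    have p2 : 0 ≤ γ^2 * (ω₂:ℝ)^2 := by positivity
    rw [mul_add]
    simp only [min_def]
    split_ifs <;> linarith
  rw [hdiff]
  have hT0 : a * r^4 / (320 * γ^2) * min (γ^2 * ((ω₁:ℝ)^2 + (ω₂:ℝ)^2)) 1 ≤ T := by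
    have := mul_le_mul_of_nonneg_left hmin (show 0 ≤ a * r^4 / (320 * γ^2) by positivity)
    have e : a * r^4 / (160 * γ^2) = 2 * (a * r^4 / (320 * γ^2)) := by field_simp; ring
    rw [e] at hT1' hT2'
    linarith
  have hm0 : 0 ≤ min (γ^2 * ((ω₁:ℝ)^2 + (ω₂:ℝ)^2)) 1 := by positivity
  have hTn : 0 ≤ T := le_trans (by positivity) hT0
  calc a * r^4 / (49 * 320) * min (γ^2 * ((ω₁:ℝ)^2 + (ω₂:ℝ)^2)) 1
      = 1/49 * γ^2 * (a * r^4 / (320 * γ^2) * min (γ^2 * ((ω₁:ℝ)^2 + (ω₂:ℝ)^2)) 1) := by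
        field_simp
    _ ≤ 1/49 * γ^2 * T := by gcongr
    _ ≤ c * γ^2 * T := by gcongr

end IsingKac
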